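/- The number of 5-variable balanced unate Boolean functions is 18202, and the number of 6-variable balanced unate Boolean functions is 31392428. -/

import Mathlib

/-- Monotone increasing in the i-th variable. -/
def MonoIncIn {n : ℕ} (f : (Fin n → Bool) → Bool) (i : Fin n) : Prop :=
  ∀ x : Fin n → Bool, f (Function.update x i false) ≤ f (Function.update x i true)

/-- Monotone decreasing in the i-th variable. -/
def MonoDecIn {n : ℕ} (f : (Fin n → Bool) → Bool) (i : Fin n) : Prop :=
  ∀ x : Fin n → Bool, f (Function.update x i true) ≤ f (Function.update x i false)

/-- A monotone Boolean function: monotone increasing in every variable. -/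
def IsMonotoneBF {n : ℕ} (f : (Fin n → Bool) → Bool) : Prop :=
  ∀ i : Fin n, MonoIncIn f i

/-- A unate Boolean function: for each variable, monotone increasing or decreasing. -/
def IsUnate {n : ℕ} (f : (Fin n → Bool) → Bool) : Prop :=
  ∀ i : Fin n, MonoIncIn f i ∨ MonoDecIn f i

/-- Non-degenerate in the i-th variable. -/
def NonDegenerateIn {n : ℕ} (f : (Fin n → Bool) → Bool) (i : Fin n) : Prop :=
  ∃ x : Fin n → Bool, f x ≠ f (Function.update x i (! x i))

/-- A non-degenerate Boolean function: non-degenerate in every variable. -/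
def NonDegenerate {n : ℕ} (f : (Fin n → Bool) → Bool) : Prop :=
  ∀ i : Fin n, NonDegenerateIn f i

/-- A balanced Boolean function takes the value true exactly 2^(n-1) times. -/
def IsBalanced {n : ℕ} (f : (Fin n → Bool) → Bool) : Prop :=
  Nat.card {x : Fin n → Bool // f x = true} = 2 ^ (n - 1)

/-- The weight of a Boolean function: number of inputs on which it is true. -/
noncomputable def weightBF {n : ℕ} (f : (Fin n → Bool) → Bool) : ℕ :=
  Nat.card {x : Fin n → Bool // f x = true}

/-- Concatenation f = g || h of two n-variable Boolean functions. -/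
def concatBF {n : ℕ} (g h : (Fin n → Bool) → Bool) : (Fin (n + 1) → Bool) → Bool :=
  fun x => if x 0 = true then h (fun i => x i.succ) else g (fun i => x i.succ)

/-- Equivalence under permutation of variables, on the subtype of functions with property P. -/
def varEquiv (n : ℕ) (P : ((Fin n → Bool) → Bool) → Prop) :
    Setoid {f : (Fin n → Bool) → Bool // P f} where
  r f g := ∃ π : Equiv.Perm (Fin n),
    ∀ x : Fin n → Bool, (g : (Fin n → Bool) → Bool) x = (f : (Fin n → Bool) → Bool) (x ∘ π)
  iseqv := by
    constructor
    · intro f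
      exact ⟨Equiv.refl _, fun x => by simp⟩
    · rintro f g ⟨π, h⟩
      refine ⟨π.symm, fun x => ?_⟩
      simpa [Function.comp_def] using (h (x ∘ π.symm)).symm
    · rintro f g k ⟨π1, h1⟩ ⟨π2, h2⟩
      refine ⟨π1.trans π2, fun x => ?_⟩
      rw [h2 x, h1 (x ∘ π2)]
      rfl

open Finset

/-- Boolean functions of `n` variables. -/
abbrev BoolFun (n : ℕ) : Type := (Fin n → Bool) → Bool

/-! ### Restricting one variable -/

/-- The restriction of `f` obtained by fixing the variable `p` to `b`. -/
def cofactor {n : ℕ} (p : Fin (n + 1)) (b : Bool) (f : BoolFun (n + 1)) : BoolFun n :=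
  fun y => f (p.insertNth b y)

/-- A Boolean function is determined by its two restrictions along a variable. -/
def cofactorEquiv {n : ℕ} (p : Fin (n + 1)) : BoolFun (n + 1) ≃ BoolFun n × BoolFun n where
  toFun f := (cofactor p false f, cofactor p true f)
  invFun gh := fun x => bif x p then gh.2 (p.removeNth x) else gh.1 (p.removeNth x)
  left_inv f := by
    funext x
    have hx := p.insertNth_self_removeNth x
    cases h : x p <;> rw [h] at hx <;> simp only [cofactor, h, hx, cond_true, cond_false]
  right_inv gh := by
    ext y <;> simp [cofactor]

theorem cofactor_false_cofactorEquiv_symm {n : ℕ} (p : Fin (n + 1)) (g h : BoolFun n) :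
    cofactor p false ((cofactorEquiv p).symm (g, h)) = g :=
  congrArg Prod.fst ((cofactorEquiv p).apply_symm_apply (g, h))

theorem cofactor_true_cofactorEquiv_symm {n : ℕ} (p : Fin (n + 1)) (g h : BoolFun n) :
    cofactor p true ((cofactorEquiv p).symm (g, h)) = h :=
  congrArg Prod.snd ((cofactorEquiv p).apply_symm_apply (g, h))

theorem forall_insertNth {n : ℕ} (p : Fin (n + 1)) {P : (Fin (n + 1) → Bool) → Prop} :
    (∀ x, P x) ↔ ∀ b y, P (p.insertNth b y) :=
  ⟨fun h _ _ => h _, fun h x => by simpa using h (x p) (p.removeNth x)⟩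

theorem le_iff_cofactor_le {n : ℕ} (p : Fin (n + 1)) (f g : BoolFun (n + 1)) :
    f ≤ g ↔ cofactor p false f ≤ cofactor p false g ∧ cofactor p true f ≤ cofactor p true g := by
  simp only [Pi.le_def]
  rw [forall_insertNth p, Bool.forall_bool]
  rfl

theorem monoIncIn_iff_cofactor_le {n : ℕ} (p : Fin (n + 1)) (f : BoolFun (n + 1)) :
    MonoIncIn f p ↔ cofactor p false f ≤ cofactor p true f := by
  unfold MonoIncIn
  rw [forall_insertNth p]
  simp [cofactor, Pi.le_def]

theorem monoDecIn_iff_cofactor_le {n : ℕ} (p : Fin (n + 1)) (f : BoolFun (n + 1)) :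
    MonoDecIn f p ↔ cofactor p true f ≤ cofactor p false f := by
  unfold MonoDecIn
  rw [forall_insertNth p]
  simp [cofactor, Pi.le_def]

theorem monoIncIn_succAbove {n : ℕ} (p : Fin (n + 1)) (j : Fin n) (f : BoolFun (n + 1)) :
    MonoIncIn f (p.succAbove j) ↔
      MonoIncIn (cofactor p false f) j ∧ MonoIncIn (cofactor p true f) j := by
  unfold MonoIncIn
  rw [forall_insertNth p, Bool.forall_bool]
  simp [cofactor, Fin.insertNth_update]

theorem monoDecIn_succAbove {n : ℕ} (p : Fin (n + 1)) (j : Fin n) (f : BoolFun (n + 1)) :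
    MonoDecIn f (p.succAbove j) ↔
      MonoDecIn (cofactor p false f) j ∧ MonoDecIn (cofactor p true f) j := by
  unfold MonoDecIn
  rw [forall_insertNth p, Bool.forall_bool]
  simp [cofactor, Fin.insertNth_update]

theorem weightBF_eq_sum {n : ℕ} (f : BoolFun n) : weightBF f = ∑ x, (f x).toNat := by
  rw [weightBF, Nat.card_eq_fintype_card, Fintype.card_subtype, card_filter]
  exact sum_congr rfl fun x _ => by cases f x <;> rfl

theorem weightBF_eq_cofactor_add_cofactor {n : ℕ} (p : Fin (n + 1)) (f : BoolFun (n + 1)) :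
    weightBF f = weightBF (cofactor p false f) + weightBF (cofactor p true f) := by
  simp only [weightBF_eq_sum]
  rw [← (Fin.insertNthEquiv (fun _ => Bool) p).sum_comp, Fintype.sum_prod_type, Fintype.sum_bool,
    add_comm]
  rfl

/-! ### Prescribed behaviour in each variable -/

/-- `f` is increasing, decreasing or constant in the variable `i` according to the sign `s`. -/
def HasMode {n : ℕ} (f : BoolFun n) (i : Fin n) : SignType → Prop
  | 1 => MonoIncIn f i
  | -1 => MonoDecIn f i
  | 0 => MonoIncIn f i ∧ MonoDecIn f i

theorem hasMode_succAbove {n : ℕ} (p : Fin (n + 1)) (j : Fin n) (f : BoolFun (n + 1))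
    (s : SignType) :
    HasMode f (p.succAbove j) s ↔
      HasMode (cofactor p false f) j s ∧ HasMode (cofactor p true f) j s := by
  cases s
  · exact (and_congr (monoIncIn_succAbove p j f) (monoDecIn_succAbove p j f)).trans and_and_and_comm
  · exact monoDecIn_succAbove p j f
  · exact monoIncIn_succAbove p j f

theorem hasMode_zero_iff {n : ℕ} (p : Fin (n + 1)) (f : BoolFun (n + 1)) :
    HasMode f p 0 ↔ cofactor p false f = cofactor p true f :=
  (and_congr (monoIncIn_iff_cofactor_le p f) (monoDecIn_iff_cofactor_le p f)).trans
    antisymm_iff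

open Classical in
/-- The number of functions of weight `w` with mode `t i` in each variable `i`. -/
noncomputable def modeCount {n : ℕ} (t : Fin n → SignType) (w : ℕ) : ℕ :=
  #{f : BoolFun n | (∀ i, HasMode f i (t i)) ∧ weightBF f = w}

theorem modeCount_removeNth {n : ℕ} (t : Fin (n + 1) → SignType) (p : Fin (n + 1)) (hp : t p = 0)
    (w : ℕ) : modeCount t (2 * w) = modeCount (p.removeNth t) w := by
  classical
  symm
  refine card_bij' (fun g _ => (cofactorEquiv p).symm (g, g)) (fun f _ => cofactor p false f)
    ?_ ?_ ?_ ?_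
  · intro g hg
    simp only [mem_filter, mem_univ, true_and] at hg ⊢
    rw [Fin.forall_iff_succAbove p, hp, hasMode_zero_iff, weightBF_eq_cofactor_add_cofactor p]
    simp only [hasMode_succAbove, cofactor_false_cofactorEquiv_symm,
      cofactor_true_cofactorEquiv_symm, and_self, true_and]
    exact ⟨hg.1, by omega⟩
  · intro f hf
    simp only [mem_filter, mem_univ, true_and] at hf ⊢
    rw [Fin.forall_iff_succAbove p, hp, hasMode_zero_iff, weightBF_eq_cofactor_add_cofactor p] at hf
    obtain ⟨⟨h, hm⟩, hw⟩ := hf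
    refine ⟨fun j => ((hasMode_succAbove p j f _).1 (hm j)).1, ?_⟩
    rw [← h] at hw
    omega
  · intro g hg
    exact cofactor_false_cofactorEquiv_symm p g g
  · intro f hf
    simp only [mem_filter, mem_univ, true_and] at hf
    have h := hf.1 p
    rw [hp, hasMode_zero_iff] at h
    rw [Equiv.symm_apply_eq]
    exact Prod.ext rfl h

/-- The number of variables in which the mode is `0`. -/
def zeroCount {n : ℕ} (t : Fin n → SignType) : ℕ := ∑ i, if t i = 0 then 1 else 0

theorem zeroCount_eq_removeNth_add {n : ℕ} (t : Fin (n + 1) → SignType) (p : Fin (n + 1)) :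
    zeroCount t = (if t p = 0 then 1 else 0) + zeroCount (p.removeNth t) :=
  Fin.sum_univ_succAbove _ p

theorem exists_eq_zero_of_zeroCount {n : ℕ} (t : Fin n → SignType) (h : 0 < zeroCount t) :
    ∃ i, t i = 0 := by
  by_contra! hne
  simp [zeroCount, hne] at h

theorem exists_modeCount_eq {n m k : ℕ} (hn : n = m + k) (t : Fin n → SignType)
    (h : k ≤ zeroCount t) (w : ℕ) : ∃ t' : Fin m → SignType,
      zeroCount t = zeroCount t' + k ∧ modeCount t (2 ^ k * w) = modeCount t' w := by
  induction k generalizing n with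
  | zero =>
    subst hn
    exact ⟨t, by simp, by simp⟩
  | succ k ih =>
    obtain rfl : n = m + k + 1 := hn
    obtain ⟨p, hp⟩ := exists_eq_zero_of_zeroCount t (by omega)
    have hz := zeroCount_eq_removeNth_add t p
    rw [if_pos hp] at hz
    obtain ⟨t', h1, h2⟩ := ih rfl (p.removeNth t) (by omega)
    refine ⟨t', by omega, ?_⟩
    rw [← h2, ← modeCount_removeNth t p hp, pow_succ', mul_assoc]

/-- Negation of the variables in which the sign is `-1`. -/
def negVars {n : ℕ} (t : Fin n → SignType) (x : Fin n → Bool) : Fin n → Bool :=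
  fun i => bif decide (t i = -1) then !x i else x i

theorem negVars_negVars {n : ℕ} (t : Fin n → SignType) (x : Fin n → Bool) :
    negVars t (negVars t x) = x := by
  funext i
  by_cases h : t i = -1 <;> simp [negVars, h]

theorem negVars_update {n : ℕ} (t : Fin n → SignType) (x : Fin n → Bool) (i : Fin n) (b : Bool) :
    negVars t (Function.update x i b) =
      Function.update (negVars t x) i (bif decide (t i = -1) then !b else b) := by
  funext j
  by_cases h : j = i
  · subst h; simp [negVars]
  · simp [negVars, h]

theorem hasMode_one_comp_negVars {n : ℕ} (t : Fin n → SignType) (f : BoolFun n) (i : Fin n)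
    (hi : t i ≠ 0) : HasMode (f ∘ negVars t) i 1 ↔ HasMode f i (t i) := by
  have hs : Function.Surjective (negVars t) := fun x => ⟨negVars t x, negVars_negVars t x⟩
  change (∀ x, f (negVars t (Function.update x i false)) ≤
    f (negVars t (Function.update x i true))) ↔ _
  simp only [negVars_update]
  rcases h : t i with _ | _ | _
  · exact absurd h hi
  · exact (hs.forall
      (p := fun x => f (Function.update x i true) ≤ f (Function.update x i false))).symm
  · exact (hs.forall
      (p := fun x => f (Function.update x i false) ≤ f (Function.update x i true))).symm

theorem weightBF_comp_negVars {n : ℕ} (t : Fin n → SignType) (f : BoolFun n) :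
    weightBF (f ∘ negVars t) = weightBF f := by
  simp only [weightBF_eq_sum]
  exact Equiv.sum_comp (Function.Involutive.toPerm (negVars t) (negVars_negVars t))
    fun x => (f x).toNat

theorem modeCount_of_zeroCount_eq_zero {n : ℕ} (t : Fin n → SignType) (ht : zeroCount t = 0)
    (w : ℕ) : modeCount t w = modeCount (fun _ : Fin n => 1) w := by
  classical
  have hne (i) : t i ≠ 0 := by
    intro hi
    have := sum_eq_zero_iff.1 ht i (mem_univ i)
    simp [hi] at this
  have hinv (f : BoolFun n) : (f ∘ negVars t) ∘ negVars t = f := by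
    funext x
    simp [negVars_negVars]
  refine card_bij' (fun f _ => f ∘ negVars t) (fun f _ => f ∘ negVars t) ?_ ?_
    (fun f _ => hinv f) (fun f _ => hinv f)
  · intro f hf
    simp only [mem_filter, mem_univ, true_and, weightBF_comp_negVars,
      hasMode_one_comp_negVars t f _ (hne _)] at hf ⊢
    exact hf
  · intro f hf
    simp only [mem_filter, mem_univ, true_and, weightBF_comp_negVars] at hf ⊢
    refine ⟨fun i => ?_, hf.2⟩
    rw [← hasMode_one_comp_negVars t _ i (hne i), hinv]
    exact hf.1 i

/-! ### Inclusion–exclusion over the modes -/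

open Classical in
theorem indicator_inc_or_dec {n : ℕ} (f : BoolFun n) (i : Fin n) :
    (if MonoIncIn f i ∨ MonoDecIn f i then (1 : ℤ) else 0) =
      ∑ s : SignType, (if s = 0 then -1 else 1) * if HasMode f i s then 1 else 0 := by
  have huniv : (univ : Finset SignType) = {0, -1, 1} := rfl
  have h1 : HasMode f i 1 ↔ MonoIncIn f i := Iff.rfl
  have h2 : HasMode f i (-1) ↔ MonoDecIn f i := Iff.rfl
  have h0 : HasMode f i 0 ↔ MonoIncIn f i ∧ MonoDecIn f i := Iff.rfl
  rw [huniv, sum_insert (by decide), sum_insert (by decide), sum_singleton]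
  by_cases hI : MonoIncIn f i <;> by_cases hD : MonoDecIn f i <;> simp [h0, h1, h2, hI, hD]

theorem card_unate_balanced_eq_sum (n : ℕ) :
    (Nat.card {f : BoolFun n // IsUnate f ∧ IsBalanced f} : ℤ) =
      ∑ t : Fin n → SignType, (-1) ^ zeroCount t * (modeCount t (2 ^ (n - 1)) : ℤ) := by
  classical
  have hind (f : BoolFun n) : (if IsUnate f ∧ IsBalanced f then (1 : ℤ) else 0) =
      ∑ t : Fin n → SignType, (-1) ^ zeroCount t *
        if (∀ i, HasMode f i (t i)) ∧ weightBF f = 2 ^ (n - 1) then 1 else 0 := by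
    have hb : IsBalanced f ↔ weightBF f = 2 ^ (n - 1) := Iff.rfl
    by_cases hw : weightBF f = 2 ^ (n - 1)
    · simp only [hb, hw, and_true]
      have hprod : (if IsUnate f then (1 : ℤ) else 0) =
          ∏ i, if MonoIncIn f i ∨ MonoDecIn f i then 1 else 0 := by
        simp only [prod_boole, IsUnate, mem_univ, true_imp_iff]
        congr
      rw [hprod, prod_congr rfl fun i _ => indicator_inc_or_dec f i, prod_univ_sum,
        Fintype.piFinset_univ]
      refine sum_congr rfl fun t _ => ?_
      rw [prod_mul_distrib, prod_boole, zeroCount, ← prod_pow_eq_pow_sum]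
      congr 1
      · exact prod_congr rfl fun i _ => by split_ifs <;> simp
      · simp
    · simp [hb, hw]
  rw [Nat.card_eq_fintype_card, Fintype.card_subtype, card_filter]
  push_cast
  rw [sum_congr rfl fun f _ => hind f, sum_comm]
  refine sum_congr rfl fun t _ => ?_
  rw [← mul_sum, modeCount, card_filter]
  push_cast
  rfl

theorem sum_zeroCount_succ {n : ℕ} (F : ℕ → ℤ) :
    ∑ t : Fin (n + 1) → SignType, F (zeroCount t) =
      ∑ t : Fin n → SignType, (F (1 + zeroCount t) + 2 * F (zeroCount t)) := by
  have huniv : (univ : Finset SignType) = {0, -1, 1} := rfl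
  rw [← (Fin.insertNthEquiv (fun _ => SignType) 0).sum_comp, Fintype.sum_prod_type, sum_comm]
  refine sum_congr rfl fun t _ => ?_
  have hz (s : SignType) : zeroCount (Fin.insertNthEquiv (fun _ => SignType) 0 (s, t)) =
      (if s = 0 then 1 else 0) + zeroCount t := by
    rw [zeroCount_eq_removeNth_add _ 0]
    simp [Fin.consEquiv]
  simp only [hz]
  rw [huniv, sum_insert (by decide), sum_insert (by decide), sum_singleton]
  simp
  ring

/-- The sum of `F (zeroCount t)` over all modes `t` of `n` variables, computed recursively. -/
def modeSum : ℕ → (ℕ → ℤ) → ℤ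
  | 0, F => F 0
  | n + 1, F => modeSum n fun k => F (1 + k) + 2 * F k

theorem sum_zeroCount_eq_modeSum (n : ℕ) (F : ℕ → ℤ) :
    ∑ t : Fin n → SignType, F (zeroCount t) = modeSum n F := by
  induction n generalizing F with
  | zero => simp [modeSum, zeroCount]
  | succ n ih => rw [sum_zeroCount_succ, modeSum, ← ih]

/-! ### Monotone functions and their truth tables -/

theorem isMonotoneBF_succ {n : ℕ} (f : BoolFun (n + 1)) :
    IsMonotoneBF f ↔ cofactor 0 false f ≤ cofactor 0 true f ∧
      IsMonotoneBF (cofactor 0 false f) ∧ IsMonotoneBF (cofactor 0 true f) := by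
  unfold IsMonotoneBF
  rw [Fin.forall_iff_succAbove 0, monoIncIn_iff_cofactor_le]
  simp only [monoIncIn_succAbove, forall_and]

/-- The truth table of `f`, read as a binary number. -/
def truthTable : {n : ℕ} → BoolFun n → ℕ
  | 0, f => (f Fin.elim0).toNat
  | n + 1, f => truthTable (cofactor 0 false f) + 2 ^ 2 ^ n * truthTable (cofactor 0 true f)

theorem truthTable_lt {n : ℕ} (f : BoolFun n) : truthTable f < 2 ^ 2 ^ n := by
  induction n with
  | zero => simpa [truthTable] using Nat.lt_succ_of_le (Bool.toNat_le _)
  | succ n ih =>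
    have h0 := ih (cofactor 0 false f)
    have h1 := ih (cofactor 0 true f)
    rw [truthTable, pow_succ 2 n, mul_two, pow_add]
    nlinarith

theorem land_add_two_pow_mul {k a b c d : ℕ} (ha : a < 2 ^ k) (hc : c < 2 ^ k) :
    Nat.land (a + 2 ^ k * b) (c + 2 ^ k * d) = Nat.land a c + 2 ^ k * Nat.land b d := by
  have hac : a &&& c < 2 ^ k := lt_of_le_of_lt Nat.and_le_left ha
  change (a + 2 ^ k * b) &&& (c + 2 ^ k * d) = (a &&& c) + 2 ^ k * (b &&& d)
  refine Nat.eq_of_testBit_eq fun j => ?_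
  rw [add_comm a, add_comm c, add_comm (a &&& c), Nat.testBit_and, Nat.testBit_two_pow_mul_add _ ha,
    Nat.testBit_two_pow_mul_add _ hc, Nat.testBit_two_pow_mul_add _ hac]
  split_ifs <;> simp

theorem add_two_pow_mul_inj {k a b c d : ℕ} (ha : a < 2 ^ k) (hc : c < 2 ^ k) :
    a + 2 ^ k * b = c + 2 ^ k * d ↔ a = c ∧ b = d := by
  refine ⟨fun h => ?_, fun h => by rw [h.1, h.2]⟩
  have hmod := congrArg (· % 2 ^ k) h
  simp only [Nat.add_mul_mod_self_left, Nat.mod_eq_of_lt ha, Nat.mod_eq_of_lt hc] at hmod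
  subst hmod
  exact ⟨rfl, Nat.eq_of_mul_eq_mul_left (Nat.two_pow_pos k) (Nat.add_left_cancel h)⟩

theorem land_truthTable_eq_iff {n : ℕ} (f g : BoolFun n) :
    Nat.land (truthTable f) (truthTable g) = truthTable f ↔ f ≤ g := by
  induction n with
  | zero =>
    have h : f ≤ g ↔ f Fin.elim0 ≤ g Fin.elim0 :=
      ⟨fun h => h _, fun h x => by rwa [Subsingleton.elim x Fin.elim0]⟩
    rw [h, truthTable, truthTable]
    cases f Fin.elim0 <;> cases g Fin.elim0 <;> decide
  | succ n ih =>
    rw [truthTable, truthTable, land_add_two_pow_mul (truthTable_lt _) (truthTable_lt _),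
      add_two_pow_mul_inj (a := Nat.land _ _) (lt_of_le_of_lt Nat.and_le_left (truthTable_lt _))
        (truthTable_lt _),
      ih, ih, le_iff_cofactor_le 0]

/-- Comparison of Boolean functions through their truth tables. -/
def tableLE (a b : ℕ) : Bool := Nat.beq (Nat.land a b) a

theorem tableLE_truthTable {n : ℕ} (f g : BoolFun n) :
    tableLE (truthTable f) (truthTable g) = true ↔ f ≤ g := by
  rw [tableLE, Nat.beq_eq, land_truthTable_eq_iff]

/-- The truth tables of the monotone functions of `n` variables, each with its weight. -/
def monotoneTables : ℕ → List (ℕ × ℕ)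
  | 0 => [(0, 0), (1, 1)]
  | n + 1 => (monotoneTables n).flatMap fun g =>
      ((monotoneTables n).filter fun h => tableLE g.1 h.1).map fun h =>
        (g.1 + 2 ^ 2 ^ n * h.1, g.2 + h.2)

theorem sum_map_filter_eq_sum_map_ite {α : Type*} (l : List α) (p : α → Bool) (F : α → ℕ) :
    ((l.filter p).map F).sum = (l.map fun x => if p x then F x else 0).sum := by
  induction l with
  | nil => rfl
  | cons a l ih => by_cases h : p a <;> simp [h, ih]

theorem sum_map_flatMap {α β : Type*} (l : List α) (k : α → List β) (F : β → ℕ) :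
    ((l.flatMap k).map F).sum = (l.map fun x => ((k x).map F).sum).sum := by
  induction l with
  | nil => rfl
  | cons a l ih => simp [ih]

open Classical in
theorem sum_isMonotoneBF_succ {n : ℕ} (F : BoolFun (n + 1) → ℕ) :
    (∑ f, if IsMonotoneBF f then F f else 0) =
      ∑ g : BoolFun n, if IsMonotoneBF g then
        ∑ h, if IsMonotoneBF h then
          if g ≤ h then F ((cofactorEquiv 0).symm (g, h)) else 0 else 0 else 0 := by
  rw [← (cofactorEquiv 0).symm.sum_comp, Fintype.sum_prod_type]
  refine sum_congr rfl fun g _ => ?_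
  by_cases hg : IsMonotoneBF g
  · rw [if_pos hg]
    refine sum_congr rfl fun h _ => ?_
    have hm := isMonotoneBF_succ ((cofactorEquiv 0).symm (g, h))
    rw [cofactor_false_cofactorEquiv_symm, cofactor_true_cofactorEquiv_symm] at hm
    by_cases hh : IsMonotoneBF h <;> by_cases hle : g ≤ h <;> simp [hm, hg, hh, hle]
  · rw [if_neg hg]
    refine sum_eq_zero fun h _ => if_neg ?_
    rw [isMonotoneBF_succ, cofactor_false_cofactorEquiv_symm]
    exact fun hf => hg hf.2.1

theorem truthTable_cofactorEquiv_symm {n : ℕ} (g h : BoolFun n) :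
    truthTable ((cofactorEquiv 0).symm (g, h)) = truthTable g + 2 ^ 2 ^ n * truthTable h := by
  rw [truthTable, cofactor_false_cofactorEquiv_symm,
    cofactor_true_cofactorEquiv_symm]

theorem weightBF_cofactorEquiv_symm {n : ℕ} (g h : BoolFun n) :
    weightBF ((cofactorEquiv 0).symm (g, h)) = weightBF g + weightBF h := by
  rw [weightBF_eq_cofactor_add_cofactor 0, cofactor_false_cofactorEquiv_symm,
    cofactor_true_cofactorEquiv_symm]

open Classical in
theorem sum_monotoneTables (n : ℕ) (F : ℕ × ℕ → ℕ) :
    ((monotoneTables n).map F).sum =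
      ∑ f : BoolFun n, if IsMonotoneBF f then F (truthTable f, weightBF f) else 0 := by
  induction n generalizing F with
  | zero =>
    rw [← (Equiv.funUnique (Fin 0 → Bool) Bool).symm.sum_comp, Fintype.sum_bool]
    simp [monotoneTables, IsMonotoneBF, truthTable, weightBF_eq_sum]
    exact add_comm _ _
  | succ n ih =>
    rw [monotoneTables, sum_map_flatMap, ih, sum_isMonotoneBF_succ]
    refine sum_congr rfl fun g _ => ?_
    congr 1
    rw [List.map_map, sum_map_filter_eq_sum_map_ite, ih]
    simp only [tableLE_truthTable, Function.comp_apply, truthTable_cofactorEquiv_symm,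
      weightBF_cofactorEquiv_symm]

/-! ### Generating functions -/

/-- `List.foldr`, defined directly by the recursor so that the kernel evaluates it quickly. -/
noncomputable def foldrRec {α β : Type} (f : α → β → β) (b : β) (l : List α) : β :=
  l.rec b fun a _ s => f a s

theorem foldrRec_eq_foldr {α β : Type} (f : α → β → β) (b : β) (l : List α) :
    foldrRec f b l = l.foldr f b := by
  induction l with
  | nil => rfl
  | cons a l ih => exact congrArg (f a) ih

/-- `k` applied to the reversed filtered list, which is fully evaluated first. -/
noncomputable def filterThen {α β : Type} (p : α → Bool) (l : List α) (k : List α → β) : β :=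
  foldrRec (fun x ih acc => (p x).rec (ih acc) (ih (x :: acc))) k l []

theorem filterThen_eq {α β : Type} (p : α → Bool) (l : List α) (k : List α → β) :
    filterThen p l k = k (l.filter p).reverse := by
  suffices h : ∀ acc, foldrRec (fun x ih acc => (p x).rec (ih acc) (ih (x :: acc))) k l acc =
      k ((l.filter p).reverse ++ acc) by
    simpa [filterThen] using h []
  induction l with
  | nil => simp [foldrRec_eq_foldr]
  | cons a l ih =>
    intro acc
    rw [foldrRec_eq_foldr] at ih ⊢
    cases h : p a <;> simp [h, ih]

/-- The sum of `X ^ w` over the entries of `u` below `d` with weight `w`. -/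
noncomputable def sumBelow (X d : ℕ) (u : List (ℕ × ℕ)) : ℕ :=
  foldrRec (fun b s => (tableLE b.1 d).rec s (Nat.add (Nat.pow X b.2) s)) 0 u

theorem sumBelow_eq (X d : ℕ) (u : List (ℕ × ℕ)) :
    sumBelow X d u = (u.map fun b => if tableLE b.1 d then X ^ b.2 else 0).sum := by
  induction u with
  | nil => rfl
  | cons b u ih =>
    rw [List.map_cons, List.sum_cons, ← ih]
    cases h : tableLE b.1 d <;> simp [sumBelow, foldrRec_eq_foldr, h]

/-- The sum of `X ^ w` over the squares `a ≤ b, c ≤ d` of entries of `l` with total weight `w`. -/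
noncomputable def sumSquares (X : ℕ) (l : List (ℕ × ℕ)) : ℕ :=
  foldrRec (fun a s => filterThen (fun b => tableLE a.1 b.1) l fun u =>
    foldrRec (fun d s => Nat.add (Nat.mul (Nat.pow X (Nat.add a.2 d.2))
      (Nat.pow (sumBelow X d.1 u) 2)) s) s u) 0 l

theorem foldrRec_add_eq {α : Type} (l : List α) (F : α → ℕ) (s : ℕ) :
    foldrRec (fun a s => F a + s) s l = (l.map F).sum + s := by
  rw [foldrRec_eq_foldr]
  induction l with
  | nil => simp
  | cons a l ih => simp [ih, add_assoc]

theorem sumSquares_eq (X : ℕ) (l : List (ℕ × ℕ)) :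
    sumSquares X l = (l.map fun a => (l.map fun d => if tableLE a.1 d.1 then
      X ^ (a.2 + d.2) * (l.map fun b => if tableLE a.1 b.1 then
        if tableLE b.1 d.1 then X ^ b.2 else 0 else 0).sum ^ 2 else 0).sum).sum := by
  have hstep (a : ℕ × ℕ) (s : ℕ) :
      (filterThen (fun b => tableLE a.1 b.1) l fun u =>
        foldrRec (fun d s => Nat.add (Nat.mul (Nat.pow X (Nat.add a.2 d.2))
          (Nat.pow (sumBelow X d.1 u) 2)) s) s u) =
      (l.map fun d => if tableLE a.1 d.1 then
        X ^ (a.2 + d.2) * (l.map fun b => if tableLE a.1 b.1 then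
          if tableLE b.1 d.1 then X ^ b.2 else 0 else 0).sum ^ 2 else 0).sum + s := by
    rw [filterThen_eq]
    refine (foldrRec_add_eq _ (fun d : ℕ × ℕ => X ^ (a.2 + d.2) *
      sumBelow X d.1 (l.filter fun b => tableLE a.1 b.1).reverse ^ 2) s).trans ?_
    simp only [sumBelow_eq, List.map_reverse, List.sum_reverse, sum_map_filter_eq_sum_map_ite]
  rw [sumSquares]
  simp only [hstep]
  rw [foldrRec_add_eq, add_zero]

open Classical in
theorem sum_pow_weightBF_eq_sumSquares (X n : ℕ) :
    (∑ f : BoolFun (n + 2), if IsMonotoneBF f then X ^ weightBF f else 0) =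
      sumSquares X (monotoneTables n) := by
  have hite {α : Type} [Fintype α] (P : Prop) (G : α → ℕ) :
      (if P then ∑ x, G x else 0) = ∑ x, if P then G x else 0 := by
    split_ifs <;> simp
  rw [sumSquares_eq]
  simp only [sum_monotoneTables, sum_isMonotoneBF_succ, tableLE_truthTable]
  refine sum_congr rfl fun a _ => ?_
  congr 1
  simp only [sq, sum_mul_sum]
  simp only [mul_sum, hite]
  rw [sum_congr rfl fun b _ => sum_comm, sum_comm]
  refine sum_congr rfl fun d _ => sum_congr rfl fun b _ => sum_congr rfl fun c _ => ?_
  rw [le_iff_cofactor_le 0]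
  simp only [cofactor_false_cofactorEquiv_symm, cofactor_true_cofactorEquiv_symm,
    weightBF_cofactorEquiv_symm, mul_ite, ite_mul, mul_zero,
    zero_mul, ← ite_and]
  have htrans : a ≤ b → b ≤ d → a ≤ d := le_trans
  exact if_congr (by tauto) (by ring) rfl

/-- Extraction of the coefficient of `X ^ w` from a sum of fewer than `X` powers of `X`. -/
theorem sum_pow_div_mod {α : Type*} (s : Finset α) (v : α → ℕ) (X w : ℕ) (hs : #s < X) :
    (∑ a ∈ s, X ^ v a) / X ^ w % X = #{a ∈ s | v a = w} := by
  have hX : 0 < X := by omega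
  have hlow : ∑ a ∈ s with v a < w, X ^ v a < X ^ w := by
    rcases w with _ | w
    · simp
    calc ∑ a ∈ s with v a < w + 1, X ^ v a
        ≤ ∑ a ∈ s with v a < w + 1, X ^ w := by
          refine sum_le_sum fun a ha => Nat.pow_le_pow_right hX ?_
          have := (mem_filter.1 ha).2
          omega
      _ = #{a ∈ s | v a < w + 1} * X ^ w := by simp
      _ < X * X ^ w := by
          have := card_filter_le s (fun a => v a < w + 1)
          exact Nat.mul_lt_mul_of_pos_right (by omega) (by positivity)
      _ = X ^ (w + 1) := (pow_succ' X w).symm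
  have hhigh : ∑ a ∈ s with w < v a, X ^ v a = X ^ w * (X * ∑ a ∈ s with w < v a,
      X ^ (v a - w - 1)) := by
    rw [← mul_assoc, ← pow_succ, mul_sum]
    refine sum_congr rfl fun a ha => ?_
    have := (mem_filter.1 ha).2
    rw [← pow_add]
    congr 1
    omega
  have hmid : ∑ a ∈ s with v a = w, X ^ v a = X ^ w * #{a ∈ s | v a = w} := by
    rw [sum_congr rfl fun a ha => by rw [(mem_filter.1 ha).2], sum_const, smul_eq_mul, mul_comm]
  have hsplit : ∑ a ∈ s, X ^ v a = ∑ a ∈ s with v a < w, X ^ v a +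
      (∑ a ∈ s with v a = w, X ^ v a + ∑ a ∈ s with w < v a, X ^ v a) := by
    simp only [sum_filter, ← sum_add_distrib]
    refine sum_congr rfl fun a _ => ?_
    rcases lt_trichotomy (v a) w with h | h | h
    · simp [h, h.ne, h.not_gt]
    · simp [h]
    · simp [h, h.ne', h.not_gt]
  rw [hsplit, hhigh, hmid, ← mul_add, Nat.add_mul_div_left _ _ (by positivity),
    Nat.div_eq_of_lt hlow, zero_add, Nat.add_mul_mod_self_left, Nat.mod_eq_of_lt]
  exact lt_of_le_of_lt (card_filter_le _ _) hs

open Classical in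
theorem modeCount_one_eq {n X : ℕ} (hX : 2 ^ 2 ^ n < X) (w : ℕ) :
    modeCount (fun _ : Fin n => 1) w =
      (∑ f : BoolFun n, if IsMonotoneBF f then X ^ weightBF f else 0) / X ^ w % X := by
  rw [← sum_filter, sum_pow_div_mod, filter_filter]
  · rw [modeCount]
    congr
  · refine lt_of_le_of_lt (card_filter_le _ _) ?_
    rwa [card_univ, Fintype.card_fun, Fintype.card_fun, Fintype.card_bool, Fintype.card_fin]

theorem modeCount_one_add_two {n X : ℕ} (hX : 2 ^ 2 ^ (n + 2) < X) (w : ℕ) :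
    modeCount (fun _ : Fin (n + 2) => 1) w =
      sumSquares X (monotoneTables n) / X ^ w % X := by
  rw [modeCount_one_eq hX, sum_pow_weightBF_eq_sumSquares]

theorem modeCount_one_one : modeCount (fun _ : Fin 1 => 1) 1 = 1 := by
  rw [modeCount_one_eq (X := 5) (by norm_num), ← sum_monotoneTables 1 fun a => 5 ^ a.2]
  decide

theorem modeCount_one_two : modeCount (fun _ : Fin 2 => 1) 2 = 2 := by
  rw [modeCount_one_add_two (X := 2 ^ 5) (by norm_num)]
  decide +kernel

theorem modeCount_one_three : modeCount (fun _ : Fin 3 => 1) 4 = 4 := by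
  rw [modeCount_one_add_two (X := 2 ^ 9) (by norm_num)]
  decide +kernel

theorem modeCount_one_four : modeCount (fun _ : Fin 4 => 1) 8 = 24 := by
  rw [modeCount_one_add_two (X := 2 ^ 17) (by norm_num)]
  decide +kernel

theorem modeCount_one_five : modeCount (fun _ : Fin 5 => 1) 16 = 621 := by
  rw [modeCount_one_add_two (X := 2 ^ 33) (by norm_num)]
  decide +kernel

theorem modeCount_one_six : modeCount (fun _ : Fin 6 => 1) 32 = 492288 := by
  rw [modeCount_one_add_two (X := 2 ^ 65) (by norm_num)]
  decide +kernel

theorem modeCount_zero_one (t : Fin 1 → SignType) (ht : zeroCount t = 1) : modeCount t 1 = 0 := by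
  classical
  have h0 : t 0 = 0 := by
    obtain ⟨i, hi⟩ := exists_eq_zero_of_zeroCount t (by omega)
    rwa [Subsingleton.elim 0 i]
  rw [modeCount, card_eq_zero, filter_eq_empty_iff]
  rintro f - ⟨hm, hw⟩
  have h := hm 0
  rw [h0, hasMode_zero_iff] at h
  rw [weightBF_eq_cofactor_add_cofactor 0, h] at hw
  omega

/-- The number of balanced monotone functions of `n ≤ 6` variables, where a function without
variables is never considered balanced. -/
def balancedMonotoneCount (n : ℕ) : ℕ := [0, 1, 2, 4, 24, 621, 492288].getD n 0

theorem modeCount_one_two_pow {m : ℕ} (hm : m < 6) :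
    modeCount (fun _ : Fin (m + 1) => 1) (2 ^ m) = balancedMonotoneCount (m + 1) := by
  interval_cases m
  exacts [modeCount_one_one, modeCount_one_two, modeCount_one_three, modeCount_one_four,
    modeCount_one_five, modeCount_one_six]

theorem zeroCount_le {n : ℕ} (t : Fin n → SignType) : zeroCount t ≤ n := by
  refine (sum_le_sum fun i _ => (?_ : _ ≤ 1)).trans_eq (by simp)
  split_ifs <;> simp

theorem modeCount_two_pow {n : ℕ} (hn : n < 6) (t : Fin (n + 1) → SignType) :
    modeCount t (2 ^ n) = balancedMonotoneCount (n + 1 - zeroCount t) := by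
  rcases (zeroCount_le t).lt_or_eq with h | h
  · obtain ⟨t', h0, h1⟩ := exists_modeCount_eq (m := n - zeroCount t + 1) (by omega) t le_rfl
      (2 ^ (n - zeroCount t))
    rw [← pow_add, Nat.add_sub_of_le (by omega)] at h1
    rw [h1, modeCount_of_zeroCount_eq_zero t' (by omega), modeCount_one_two_pow (by omega)]
    congr 1
    omega
  · obtain ⟨t', h0, h1⟩ := exists_modeCount_eq (m := 1) (k := n) (by omega) t (by omega) 1
    rw [mul_one] at h1
    rw [h1, modeCount_zero_one t' (by omega), h, Nat.sub_self]
    rfl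

theorem card_unate_balanced {n : ℕ} (hn : n < 6) :
    (Nat.card {f : BoolFun (n + 1) // IsUnate f ∧ IsBalanced f} : ℤ) =
      modeSum (n + 1) fun k => (-1) ^ k * (balancedMonotoneCount (n + 1 - k) : ℤ) := by
  rw [card_unate_balanced_eq_sum, ← sum_zeroCount_eq_modeSum]
  refine sum_congr rfl fun t _ => ?_
  rw [Nat.add_sub_cancel, modeCount_two_pow hn]

theorem stmt19 :
    Nat.card {f : (Fin 5 → Bool) → Bool // IsUnate f ∧ IsBalanced f} = 18202
      ∧ Nat.card {f : (Fin 6 → Bool) → Bool // IsUnate f ∧ IsBalanced f} = 31392428 := by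
  constructor
  · have h := card_unate_balanced (n := 4) (by norm_num)
    exact_mod_cast h.trans (by decide +kernel : _ = (18202 : ℤ))
  · have h := card_unate_balanced (n := 5) (by norm_num)
    exact_mod_cast h.trans (by decide +kernel : _ = (31392428 : ℤ))
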